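/- Let n ≥ 1 be an integer. Then the function p ↦ D**(n,p,[0,1]) is strictly increasing on (0,∞]: if 0 < p < p′ ≤ ∞ then D**(n,p,[0,1]) < D**(n,p′,[0,1]). Equivalently, the function p ↦ C(n,p) is strictly decreasing on (0,∞]. -/

import Mathlib

open Set Polynomial Nat MeasureTheory ENNReal

/-- `fd 0` belongs to `𝒟ⁿ([a,b])`, with `fd k` its `k`-th derivative: `fd k` exists and is
continuous on `[a,b]` for `0 ≤ k ≤ n-1`, and `fd n` is the derivative of `fd (n-1)` on `(a,b)`. -/
def IsDn (n : ℕ) (a b : ℝ) (fd : ℕ → ℝ → ℝ) : Prop :=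
  (∀ k, k + 1 < n → ∀ x ∈ Set.Icc a b, HasDerivWithinAt (fd k) (fd (k + 1) x) (Set.Icc a b) x) ∧
  ContinuousOn (fd (n - 1)) (Set.Icc a b) ∧
  (∀ x ∈ Set.Ioo a b, HasDerivAt (fd (n - 1)) (fd n x) x)

/-- `m_n(f) = inf_{a<t<b} |f^{(n)}(t)|`. -/
noncomputable def mIoo (n : ℕ) (a b : ℝ) (fd : ℕ → ℝ → ℝ) : ℝ :=
  sInf ((fun t => |fd n t|) '' Set.Ioo a b)

/-- `‖f‖_{p,[a,b]}` for `0 < p < ∞`. -/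
noncomputable def Lp (p a b : ℝ) (f : ℝ → ℝ) : ℝ :=
  (∫ t in a..b, |f t| ^ p) ^ (1 / p)

/-- `‖f‖_{∞,[a,b]}`. -/
noncomputable def Lsup (a b : ℝ) (f : ℝ → ℝ) : ℝ :=
  sSup ((fun t => |f t|) '' Set.Icc a b)

/-- `‖f‖_{p,[a,b]}` for `0 < p ≤ ∞`. -/
noncomputable def pnorm (p : ℝ≥0∞) (a b : ℝ) (f : ℝ → ℝ) : ℝ :=
  if p = ⊤ then Lsup a b f else Lp p.toReal a b f

/-- `D**(n,p,[a,b])`, `p` finite. -/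
noncomputable def Dstar (n : ℕ) (p a b : ℝ) : ℝ :=
  sInf { c | ∃ Q : Polynomial ℝ, Q.Monic ∧ Q.natDegree = n ∧ c = Lp p a b (fun x => Q.eval x) }

/-- `D**(n,∞,[a,b])`. -/
noncomputable def DstarInf (n : ℕ) (a b : ℝ) : ℝ :=
  sInf { c | ∃ Q : Polynomial ℝ, Q.Monic ∧ Q.natDegree = n ∧ c = Lsup a b (fun x => Q.eval x) }

/-- `C(n,p)`, `p` finite. -/
noncomputable def Cnp (n : ℕ) (p : ℝ) : ℝ :=
  sSup { c | ∃ fd : ℕ → ℝ → ℝ, IsDn n 0 1 fd ∧ (∃ x ∈ Set.Icc (0:ℝ) 1, fd 0 x ≠ 0) ∧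
    c = mIoo n 0 1 fd / Lp p 0 1 (fd 0) }

/-- `C(n,∞)`. -/
noncomputable def CnpInf (n : ℕ) : ℝ :=
  sSup { c | ∃ fd : ℕ → ℝ → ℝ, IsDn n 0 1 fd ∧ (∃ x ∈ Set.Icc (0:ℝ) 1, fd 0 x ≠ 0) ∧
    c = mIoo n 0 1 fd / Lsup 0 1 (fd 0) }

/-!
If `f ∈ 𝒟ⁿ([a, b])` has `|f⁽ⁿ⁾| ≥ m`, then some monic polynomial `P` of degree `n` with all its
roots in `[a, b]` satisfies `(m / n!) |P| ≤ |f|` on `[a, b]`. Indeed `f⁽ⁿ⁾` has constant sign, say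
`f⁽ⁿ⁾ ≥ m`; taking for `c` the point where the value of `f` is closest to `0` gives
`|f - f c| ≤ |f|`, and `f - f c = (x - c) g` with `g⁽ⁿ⁻¹⁾ ≥ m / n`, so `P` arises by induction.

Applied to monic polynomials this reduces `D**(n, p)` to polynomials with roots in the compact set
`[0, 1]ⁿ`, so the infimum is attained; applied to all of `𝒟ⁿ` it gives `C(n, p) = n! / D**(n, p)`.
A minimizer for `p'` vanishes somewhere on `[0, 1]` without vanishing identically, so by strict
Jensen its `p`-norm is strictly smaller than its `p'`-norm when `p < p'`. For `p' = ∞`, compare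
with `p + 1`.
-/

section Slope

/-- `HasSlopeGE K s g` says that every difference quotient of `g` between points of `s` is at
least `K`: the derivative-free form of `g' ≥ K`. -/
def HasSlopeGE (K : ℝ) (s : Set ℝ) (g : ℝ → ℝ) : Prop :=
  ∀ x ∈ s, ∀ y ∈ s, x ≤ y → K * (y - x) ≤ g y - g x

lemma HasSlopeGE.mul_abs_sub_le_abs_sub {K : ℝ} {s : Set ℝ} {g : ℝ → ℝ} (hg : HasSlopeGE K s g)
    {x y : ℝ} (hx : x ∈ s) (hy : y ∈ s) : K * |x - y| ≤ |g x - g y| := by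
  rcases le_total x y with hxy | hyx
  · rw [abs_sub_comm x, abs_sub_comm (g x), abs_of_nonneg (sub_nonneg.2 hxy)]
    exact (hg x hx y hy hxy).trans (le_abs_self _)
  · rw [abs_of_nonneg (sub_nonneg.2 hyx)]
    exact (hg y hy x hx hyx).trans (le_abs_self _)

lemma exists_mem_forall_abs_sub_le_abs {X : Type*} [TopologicalSpace X] {s : Set X}
    (hs : IsCompact s) (hconn : IsConnected s) {f : X → ℝ} (hf : ContinuousOn f s) :
    ∃ c ∈ s, ∀ x ∈ s, |f x - f c| ≤ |f x| := by
  obtain ⟨u, hu, hmin⟩ := hs.exists_isMinOn hconn.nonempty hf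
  obtain ⟨v, hv, hmax⟩ := hs.exists_isMaxOn hconn.nonempty hf
  rcases le_total 0 (f u) with hu0 | hu0
  · refine ⟨u, hu, fun x hx => ?_⟩
    have hux : f u ≤ f x := hmin hx
    exact abs_le_abs_of_nonneg (sub_nonneg.2 hux) (by linarith)
  rcases le_total (f v) 0 with hv0 | hv0
  · refine ⟨v, hv, fun x hx => ?_⟩
    have hxv : f x ≤ f v := hmax hx
    exact abs_le_abs_of_nonpos (sub_nonpos.2 hxv) (by linarith)
  · obtain ⟨c, hc, hc0⟩ := hconn.isPreconnected.intermediate_value hu hv hf ⟨hu0, hv0⟩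
    exact ⟨c, hc, fun x _ => by rw [hc0, sub_zero]⟩

end Slope

section SegmentMoment

/-- The moment `∫₀¹ sʲ ψ(c + s(x - c)) ds` of `ψ` along the segment from `c` to `x`. For `j = 0`
and `ψ = f'` it is the divided difference `f[c, x]`, smooth across `x = c`; the weights `sʲ` are
there because differentiation in `x` turns `(j, ψ)` into `(j + 1, ψ')`. -/
noncomputable def segmentMoment (j : ℕ) (c : ℝ) (ψ : ℝ → ℝ) (x : ℝ) : ℝ :=
  ∫ s in (0 : ℝ)..1, s ^ j * ψ (c + s * (x - c))

variable {ψ : ℝ → ℝ} (j : ℕ) (c : ℝ)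

lemma continuous_segmentMoment (hψ : Continuous ψ) : Continuous (segmentMoment j c ψ) :=
  intervalIntegral.continuous_parametric_intervalIntegral_of_continuous' (by fun_prop) _ _

lemma hasDerivAt_segmentMoment (hψ : ContDiff ℝ 1 ψ) (x : ℝ) :
    HasDerivAt (segmentMoment j c ψ) (segmentMoment (j + 1) c (deriv ψ) x) x := by
  have : Continuous ψ := hψ.continuous
  have : Continuous (deriv ψ) := hψ.continuous_deriv le_rfl
  let F' : ℝ → ℝ → ℝ := fun y s => s ^ (j + 1) * deriv ψ (c + s * (y - c))
  have hderiv (s y : ℝ) : HasDerivAt (fun y => s ^ j * ψ (c + s * (y - c))) (F' y s) y := by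
    have hseg : HasDerivAt (fun y : ℝ => c + s * (y - c)) (s * 1) y :=
      (((hasDerivAt_id y).sub_const c).const_mul s).const_add c
    have hψy := (hψ.differentiable one_ne_zero (c + s * (y - c))).hasDerivAt
    exact ((hψy.comp y hseg).const_mul (s ^ j)).congr_deriv (by ring)
  obtain ⟨B, hB⟩ := (isCompact_Icc.prod (isCompact_closedBall x 1)).exists_bound_of_continuousOn
    (s := Icc (0 : ℝ) 1 ×ˢ Metric.closedBall x 1) (f := fun q => F' q.2 q.1) (by fun_prop)
  refine (intervalIntegral.hasDerivAt_integral_of_dominated_loc_of_deriv_le (bound := fun _ => B)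
    (F' := F') (Metric.closedBall_mem_nhds x one_pos) (.of_forall fun y => ?_) ?_ ?_
    (.of_forall fun s hs y hy => ?_) ?_ (.of_forall fun s _ y _ => hderiv s y)).2
  · exact Continuous.aestronglyMeasurable (by fun_prop)
  · exact Continuous.intervalIntegrable (by fun_prop) _ _
  · exact Continuous.aestronglyMeasurable (by fun_prop)
  · rw [uIoc_of_le zero_le_one] at hs
    exact hB (s, y) ⟨Ioc_subset_Icc_self hs, hy⟩
  · exact intervalIntegrable_const

lemma deriv_segmentMoment (hψ : ContDiff ℝ 1 ψ) :
    deriv (segmentMoment j c ψ) = segmentMoment (j + 1) c (deriv ψ) :=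
  funext fun x => (hasDerivAt_segmentMoment j c hψ x).deriv

lemma contDiff_segmentMoment {n : ℕ} (hψ : ContDiff ℝ n ψ) :
    ContDiff ℝ n (segmentMoment j c ψ) := by
  induction n generalizing j ψ with
  | zero => exact contDiff_zero.2 (continuous_segmentMoment j c hψ.continuous)
  | succ n ih =>
    have hψ₁ : ContDiff ℝ 1 ψ := hψ.of_le (by norm_cast; omega)
    refine (contDiff_succ_iff_deriv (n := n)).2 ⟨fun x =>
      (hasDerivAt_segmentMoment j c hψ₁ x).differentiableAt, by simp, ?_⟩
    rw [deriv_segmentMoment j c hψ₁]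
    exact ih (j + 1) (contDiff_succ_iff_deriv.1 hψ).2.2

lemma iteratedDeriv_segmentMoment {n : ℕ} (hψ : ContDiff ℝ n ψ) :
    iteratedDeriv n (segmentMoment j c ψ) = segmentMoment (j + n) c (iteratedDeriv n ψ) := by
  induction n generalizing j ψ with
  | zero => simp only [iteratedDeriv_zero, add_zero]
  | succ n ih =>
    rw [iteratedDeriv_succ', deriv_segmentMoment j c (hψ.of_le (by norm_cast; omega)),
      ih (j + 1) (contDiff_succ_iff_deriv.1 hψ).2.2, iteratedDeriv_succ', add_right_comm, add_assoc]

lemma sub_eq_mul_segmentMoment_deriv {f : ℝ → ℝ} (hf : ContDiff ℝ 1 f) (x : ℝ) :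
    f x - f c = (x - c) * segmentMoment 0 c (deriv f) x := by
  have : Continuous (deriv f) := hf.continuous_deriv le_rfl
  have hderiv (s : ℝ) : HasDerivAt (fun s => f (c + s * (x - c)))
      ((x - c) * deriv f (c + s * (x - c))) s := by
    have hseg : HasDerivAt (fun s : ℝ => c + s * (x - c)) (1 * (x - c)) s :=
      ((hasDerivAt_id s).mul_const _).const_add c
    have hfs := (hf.differentiable one_ne_zero (c + s * (x - c))).hasDerivAt
    exact (hfs.comp s hseg).congr_deriv (by ring)
  have hFTC := intervalIntegral.integral_eq_sub_of_hasDerivAt (a := 0) (b := 1)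
    (fun s _ => hderiv s) (Continuous.intervalIntegrable (by fun_prop) _ _)
  simpa [segmentMoment] using hFTC.symm

lemma HasSlopeGE.segmentMoment {K : ℝ} {s : Set ℝ} (hs : Convex ℝ s) (hψ : Continuous ψ)
    (hslope : HasSlopeGE K s ψ) (hc : c ∈ s) :
    HasSlopeGE (K / (j + 2)) s (segmentMoment j c ψ) := by
  intro x hx y hy hxy
  have hpoint : ∀ t ∈ Icc (0 : ℝ) 1, t ^ (j + 1) * (K * (y - x)) ≤
      t ^ j * ψ (c + t * (y - c)) - t ^ j * ψ (c + t * (x - c)) := fun t ht => by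
    have hle := hslope _ (hs.add_smul_sub_mem hc hx ht) _ (hs.add_smul_sub_mem hc hy ht)
      (by simp only [smul_eq_mul]; gcongr; exact ht.1)
    simp only [smul_eq_mul] at hle
    linear_combination mul_le_mul_of_nonneg_left hle (pow_nonneg ht.1 j)
  have hint : ∀ z, IntervalIntegrable (fun t => t ^ j * ψ (c + t * (z - c))) volume 0 1 :=
    fun z => Continuous.intervalIntegrable (by fun_prop) _ _
  calc K / (j + 2) * (y - x) = ∫ t in (0 : ℝ)..1, t ^ (j + 1) * (K * (y - x)) := by
        rw [intervalIntegral.integral_mul_const, integral_pow]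
        push_cast
        field_simp
        ring
    _ ≤ ∫ t in (0 : ℝ)..1, (t ^ j * ψ (c + t * (y - c)) - t ^ j * ψ (c + t * (x - c))) :=
        intervalIntegral.integral_mono_on zero_le_one
          (Continuous.intervalIntegrable (by fun_prop) _ _) ((hint y).sub (hint x)) hpoint
    _ = _ := intervalIntegral.integral_sub (hint y) (hint x)

end SegmentMoment

section NodalMinorant

/-- `f` is of class `Cⁿ` and satisfies `f⁽ⁿ⁺¹⁾ ≥ K` on `s` in the weak sense that the increments
of `f⁽ⁿ⁾` on `s` are bounded below, so that `f⁽ⁿ⁺¹⁾` need not exist. -/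
structure HasWeakDerivGE (n : ℕ) (K : ℝ) (s : Set ℝ) (f : ℝ → ℝ) : Prop where
  contDiff : ContDiff ℝ n f
  hasSlopeGE : HasSlopeGE K s (iteratedDeriv n f)

lemma HasWeakDerivGE.segmentMoment_deriv {n : ℕ} {K : ℝ} {s : Set ℝ} (hs : Convex ℝ s)
    {f : ℝ → ℝ} (hf : HasWeakDerivGE (n + 1) K s f) {c : ℝ} (hc : c ∈ s) :
    HasWeakDerivGE n (K / (n + 2)) s (segmentMoment 0 c (deriv f)) := by
  have hf' : ContDiff ℝ n (deriv f) := (contDiff_succ_iff_deriv.1 hf.contDiff).2.2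
  refine ⟨contDiff_segmentMoment 0 c hf', ?_⟩
  rw [iteratedDeriv_segmentMoment 0 c hf', zero_add, ← iteratedDeriv_succ']
  exact hf.hasSlopeGE.segmentMoment n c hs (hf.contDiff.continuous_iteratedDeriv' (n + 1)) hc

theorem HasWeakDerivGE.exists_nodal_le {n : ℕ} {K a b : ℝ} (hab : a ≤ b) {f : ℝ → ℝ}
    (hf : HasWeakDerivGE n K (Icc a b) f) :
    ∃ v : Fin (n + 1) → Icc a b, ∀ x ∈ Icc a b,
      K / (n + 1).factorial * |(Lagrange.nodal Finset.univ fun i => (v i : ℝ)).eval x| ≤ |f x| := by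
  induction n generalizing K f with
  | zero =>
    obtain ⟨c, hc, hshift⟩ := exists_mem_forall_abs_sub_le_abs isCompact_Icc
      (isConnected_Icc hab) hf.contDiff.continuous.continuousOn
    refine ⟨fun _ => ⟨c, hc⟩, fun x hx => ?_⟩
    simpa [Lagrange.eval_nodal] using
      (hf.hasSlopeGE.mul_abs_sub_le_abs_sub hx hc).trans (hshift x hx)
  | succ n ih =>
    obtain ⟨c, hc, hshift⟩ := exists_mem_forall_abs_sub_le_abs isCompact_Icc
      (isConnected_Icc hab) hf.contDiff.continuous.continuousOn
    obtain ⟨w, hw⟩ := ih (hf.segmentMoment_deriv (convex_Icc a b) hc)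
    let P : ℝ[X] := Lagrange.nodal Finset.univ fun i => (w i : ℝ)
    refine ⟨Fin.cons ⟨c, hc⟩ w, fun x hx => ?_⟩
    calc K / (n + 1 + 1).factorial * |_|
        = |x - c| * (K / (n + 2) / (n + 1).factorial * |P.eval x|) := by
          simp only [P, Lagrange.eval_nodal, Fin.prod_univ_succ (n := n + 1), Fin.cons_zero,
            Fin.cons_succ, abs_mul, Nat.factorial_succ (n + 1)]
          push_cast
          field_simp
          ring
      _ ≤ |x - c| * |segmentMoment 0 c (deriv f) x| :=
          mul_le_mul_of_nonneg_left (hw x hx) (abs_nonneg _)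
      _ = |f x - f c| := by
          rw [sub_eq_mul_segmentMoment_deriv c (hf.contDiff.of_le (by norm_cast; omega)), abs_mul]
      _ ≤ |f x| := hshift x hx

end NodalMinorant

section IsDn

lemma eqOn_add_integral_of_hasDerivWithinAt {a b : ℝ} {f f' : ℝ → ℝ} (hf' : Continuous f')
    (hf : ∀ x ∈ Icc a b, HasDerivWithinAt f (f' x) (Icc a b) x) :
    EqOn (fun x => f a + ∫ t in a..x, f' t) f (Icc a b) := by
  intro x hx
  have hsub : Icc a x ⊆ Icc a b := Icc_subset_Icc_right hx.2
  have hFTC := intervalIntegral.integral_eq_sub_of_hasDerivAt_of_le hx.1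
    (fun t ht => (hf t (hsub ht)).continuousWithinAt.mono hsub)
    (fun t ht => (hf t (hsub (Ioo_subset_Icc_self ht))).hasDerivAt
      (Icc_mem_nhds ht.1 (ht.2.trans_le hx.2)))
    (hf'.intervalIntegrable a x)
  simp only [hFTC, add_sub_cancel]

lemma exists_contDiff_eqOn_Icc {n : ℕ} {a b : ℝ} (hab : a ≤ b) {g : ℕ → ℝ → ℝ}
    (hg : ∀ k < n, ∀ x ∈ Icc a b, HasDerivWithinAt (g k) (g (k + 1) x) (Icc a b) x)
    (hcont : ContinuousOn (g n) (Icc a b)) :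
    ∃ F : ℝ → ℝ, ContDiff ℝ n F ∧ EqOn F (g 0) (Icc a b) ∧
      EqOn (iteratedDeriv n F) (g n) (Icc a b) := by
  induction n generalizing g with
  | zero =>
    have hF : EqOn (IccExtend hab ((Icc a b).domRestrict (g 0))) (g 0) (Icc a b) :=
      fun x hx => IccExtend_of_mem hab _ hx
    refine ⟨_, contDiff_zero.2 hcont.domRestrict.Icc_extend', hF, ?_⟩
    rwa [iteratedDeriv_zero]
  | succ n ih =>
    obtain ⟨h, hh, hh₀, hhn⟩ :=
      ih (g := fun k => g (k + 1)) (fun k hk => hg (k + 1) (by omega)) hcont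
    have hderiv (x : ℝ) : HasDerivAt (fun x => g 0 a + ∫ t in a..x, h t) (h x) x :=
      (hh.continuous.integral_hasStrictDerivAt a x).hasDerivAt.const_add _
    have hderiv_eq : deriv (fun x => g 0 a + ∫ t in a..x, h t) = h :=
      funext fun x => (hderiv x).deriv
    refine ⟨fun x => g 0 a + ∫ t in a..x, h t, ?_, ?_, ?_⟩
    · refine (contDiff_succ_iff_deriv (n := n)).2
        ⟨fun x => (hderiv x).differentiableAt, by simp, ?_⟩
      rwa [hderiv_eq]
    · refine eqOn_add_integral_of_hasDerivWithinAt hh.continuous fun x hx => ?_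
      rw [hh₀ hx]
      exact hg 0 n.succ_pos x hx
    · rwa [iteratedDeriv_succ', hderiv_eq]

variable {n : ℕ} {a b : ℝ} {fd : ℕ → ℝ → ℝ}

lemma IsDn.continuousOn (h : IsDn (n + 1) a b fd) : ContinuousOn (fd 0) (Icc a b) := by
  cases n with
  | zero => exact h.2.1
  | succ n => exact fun x hx => (h.1 0 (by omega) x hx).continuousWithinAt

lemma IsDn.neg (h : IsDn n a b fd) : IsDn n a b (fun k x => -fd k x) :=
  ⟨fun k hk x hx => (h.1 k hk x hx).neg, h.2.1.neg, fun x hx => (h.2.2 x hx).neg⟩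

lemma IsDn.exists_hasWeakDerivGE (h : IsDn (n + 1) a b fd) (hab : a ≤ b) {K : ℝ}
    (hK : ∀ x ∈ Ioo a b, K ≤ fd (n + 1) x) :
    ∃ F, HasWeakDerivGE n K (Icc a b) F ∧ EqOn F (fd 0) (Icc a b) := by
  obtain ⟨hchain, hcont, hderiv⟩ := h
  simp only [Nat.add_sub_cancel] at hcont hderiv
  obtain ⟨F, hF, hF₀, hFn⟩ := exists_contDiff_eqOn_Icc hab (fun k hk => hchain k (by omega)) hcont
  refine ⟨F, ⟨hF, fun x hx y hy hxy => ?_⟩, hF₀⟩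
  rw [hFn hx, hFn hy]
  refine (convex_Icc a b).mul_sub_le_image_sub_of_le_deriv hcont ?_ ?_ x hx y hy hxy
  · rw [interior_Icc]
    exact fun t ht => (hderiv t ht).differentiableAt.differentiableWithinAt
  · rw [interior_Icc]
    exact fun t ht => (hderiv t ht).deriv ▸ hK t ht

lemma mIoo_nonneg (n : ℕ) (a b : ℝ) (fd : ℕ → ℝ → ℝ) : 0 ≤ mIoo n a b fd :=
  Real.sInf_nonneg (forall_mem_image.2 fun _ _ => abs_nonneg _)

lemma mIoo_le_abs {x : ℝ} (hx : x ∈ Ioo a b) : mIoo n a b fd ≤ |fd n x| :=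
  csInf_le ⟨0, forall_mem_image.2 fun _ _ => abs_nonneg _⟩ (mem_image_of_mem _ hx)

-- `f⁽ⁿ⁾` need not be continuous, so its constant sign comes from Darboux's theorem.
lemma IsDn.forall_mIoo_le_or_forall_mIoo_le_neg (h : IsDn n a b fd) (hm : 0 < mIoo n a b fd) :
    (∀ x ∈ Ioo a b, mIoo n a b fd ≤ fd n x) ∨ ∀ x ∈ Ioo a b, mIoo n a b fd ≤ -fd n x := by
  have hne : ∀ x ∈ Ioo a b, fd n x ≠ 0 := fun x hx =>
    abs_pos.1 (hm.trans_le (mIoo_le_abs hx))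
  rcases hasDerivWithinAt_forall_lt_or_forall_gt_of_forall_ne (convex_Ioo a b)
    (fun x hx => (h.2.2 x hx).hasDerivWithinAt) hne with hneg | hpos
  · exact .inr fun x hx => abs_of_neg (hneg x hx) ▸ mIoo_le_abs hx
  · exact .inl fun x hx => abs_of_pos (hpos x hx) ▸ mIoo_le_abs hx

theorem IsDn.exists_nodal_le (h : IsDn (n + 1) a b fd) (hab : a ≤ b) :
    ∃ v : Fin (n + 1) → Icc a b, ∀ x ∈ Icc a b, mIoo (n + 1) a b fd / (n + 1).factorial *
      |(Lagrange.nodal Finset.univ fun i => (v i : ℝ)).eval x| ≤ |fd 0 x| := by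
  rcases (mIoo_nonneg (n + 1) a b fd).eq_or_lt with hm | hm
  · refine ⟨fun _ => ⟨a, left_mem_Icc.2 hab⟩, fun x _ => ?_⟩
    rw [← hm, zero_div, zero_mul]
    exact abs_nonneg _
  rcases h.forall_mIoo_le_or_forall_mIoo_le_neg hm with hpos | hneg
  · obtain ⟨F, hF, hFfd⟩ := h.exists_hasWeakDerivGE hab hpos
    obtain ⟨v, hv⟩ := hF.exists_nodal_le hab
    exact ⟨v, fun x hx => hFfd hx ▸ hv x hx⟩
  · obtain ⟨F, hF, hFfd⟩ := h.neg.exists_hasWeakDerivGE hab hneg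
    obtain ⟨v, hv⟩ := hF.exists_nodal_le hab
    exact ⟨v, fun x hx => by simpa only [hFfd hx, abs_neg] using hv x hx⟩

end IsDn

section MonicPolynomial

lemma isDn_eval_iterate_derivative (Q : ℝ[X]) (n : ℕ) (a b : ℝ) :
    IsDn (n + 1) a b fun k x => (derivative^[k] Q).eval x := by
  have hderiv (k : ℕ) (x : ℝ) : HasDerivAt (fun x => (derivative^[k] Q).eval x)
      ((derivative^[k + 1] Q).eval x) x := by
    rw [Function.iterate_succ_apply']
    exact Polynomial.hasDerivAt _ _
  exact ⟨fun k _ x _ => (hderiv k x).hasDerivWithinAt, (Polynomial.continuous _).continuousOn,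
    fun x _ => hderiv n x⟩

lemma iterate_derivative_natDegree_of_monic {R : Type*} [CommSemiring R] {Q : R[X]}
    (hQ : Q.Monic) : derivative^[Q.natDegree] Q = C (Q.natDegree.factorial : R) := by
  have hdeg : (derivative^[Q.natDegree] Q).natDegree ≤ 0 :=
    (natDegree_iterate_derivative Q _).trans (Nat.sub_self _).le
  rw [eq_C_of_natDegree_le_zero hdeg, coeff_iterate_derivative, zero_add, hQ.coeff_natDegree,
    Nat.descFactorial_self, nsmul_one]

lemma mIoo_eval_iterate_derivative {Q : ℝ[X]} (hQ : Q.Monic) {a b : ℝ} (hab : a < b) :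
    mIoo Q.natDegree a b (fun k x => (derivative^[k] Q).eval x) = Q.natDegree.factorial := by
  simp only [mIoo, iterate_derivative_natDegree_of_monic hQ, eval_C, Nat.abs_cast]
  rw [(nonempty_Ioo.2 hab).image_const, csInf_singleton]

lemma exists_nodal_le_of_monic {Q : ℝ[X]} (hQ : Q.Monic) {n : ℕ} (hn : Q.natDegree = n + 1)
    {a b : ℝ} (hab : a < b) :
    ∃ v : Fin (n + 1) → Icc a b, ∀ x ∈ Icc a b,
      |(Lagrange.nodal Finset.univ fun i => (v i : ℝ)).eval x| ≤ |Q.eval x| := by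
  have hm := mIoo_eval_iterate_derivative hQ hab
  obtain ⟨v, hv⟩ := (isDn_eval_iterate_derivative Q n a b).exists_nodal_le hab.le
  refine ⟨v, fun x hx => ?_⟩
  rw [hn] at hm
  simpa [hm, Nat.factorial_ne_zero] using hv x hx

lemma exists_mem_Icc_eval_ne_zero {Q : ℝ[X]} (hQ : Q ≠ 0) {a b : ℝ} (hab : a < b) :
    ∃ x ∈ Icc a b, Q.eval x ≠ 0 := by
  by_contra! h
  exact hQ (Q.eq_zero_of_infinite_isRoot ((Icc_infinite hab).mono h))

end MonicPolynomial

section Norms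

variable {p a b : ℝ} {f g : ℝ → ℝ}

lemma Lp_nonneg (hab : a ≤ b) (p : ℝ) (f : ℝ → ℝ) : 0 ≤ Lp p a b f :=
  Real.rpow_nonneg (intervalIntegral.integral_nonneg hab fun _ _ => by positivity) _

lemma continuousOn_abs_rpow (hp : 0 ≤ p) (hf : ContinuousOn f (Icc a b)) :
    ContinuousOn (fun t => |f t| ^ p) (Icc a b) :=
  hf.abs.rpow_const fun _ _ => .inr hp

lemma Lp_mono (hab : a ≤ b) (hp : 0 < p) (hf : ContinuousOn f (Icc a b))
    (hg : ContinuousOn g (Icc a b)) (hfg : ∀ x ∈ Icc a b, |f x| ≤ |g x|) :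
    Lp p a b f ≤ Lp p a b g := by
  refine Real.rpow_le_rpow (intervalIntegral.integral_nonneg hab fun _ _ => by positivity) ?_
    (by positivity)
  exact intervalIntegral.integral_mono_on hab
    ((continuousOn_abs_rpow hp.le hf).intervalIntegrable_of_Icc hab)
    ((continuousOn_abs_rpow hp.le hg).intervalIntegrable_of_Icc hab)
    fun x hx => Real.rpow_le_rpow (abs_nonneg _) (hfg x hx) hp.le

lemma Lp_const_mul (hab : a ≤ b) (hp : 0 < p) (c : ℝ) (f : ℝ → ℝ) :
    Lp p a b (fun x => c * f x) = |c| * Lp p a b f := by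
  simp only [_root_.Lp, abs_mul, Real.mul_rpow (abs_nonneg _) (abs_nonneg _),
    intervalIntegral.integral_const_mul]
  rw [Real.mul_rpow (by positivity)
    (intervalIntegral.integral_nonneg hab fun _ _ => by positivity), one_div,
    Real.rpow_rpow_inv (abs_nonneg c) hp.ne']

lemma Lp_pos (hab : a < b) (hp : 0 < p) (hf : ContinuousOn f (Icc a b))
    (hne : ∃ x ∈ Icc a b, f x ≠ 0) : 0 < Lp p a b f := by
  obtain ⟨x, hx, hfx⟩ := hne
  refine Real.rpow_pos_of_pos ?_ _
  exact intervalIntegral.integral_pos hab (continuousOn_abs_rpow hp.le hf)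
    (fun _ _ => by positivity) ⟨x, hx, by positivity⟩

lemma Lp_le_Lsup (hp : 0 < p) (hf : ContinuousOn f (Icc 0 1)) :
    Lp p 0 1 f ≤ Lsup 0 1 f := by
  have hle : ∀ x ∈ Icc (0 : ℝ) 1, |f x| ≤ Lsup 0 1 f := fun x hx =>
    le_csSup (isCompact_Icc.image_of_continuousOn hf.abs).bddAbove (mem_image_of_mem _ hx)
  have hsup : 0 ≤ Lsup 0 1 f := (abs_nonneg _).trans (hle 0 (by simp))
  calc Lp p 0 1 f ≤ Lp p 0 1 fun _ => Lsup 0 1 f :=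
        Lp_mono zero_le_one hp hf continuousOn_const fun x hx => (hle x hx).trans (le_abs_self _)
    _ = Lsup 0 1 f := by simp [_root_.Lp, abs_of_nonneg hsup, Real.rpow_rpow_inv hsup hp.ne']

lemma rpow_integral_lt_integral_rpow {q : ℝ} (hq : 1 < q) (hf : ContinuousOn f (Icc 0 1))
    (hf₀ : ∀ x ∈ Icc 0 1, 0 ≤ f x) (hne : ∃ x ∈ Icc 0 1, ∃ y ∈ Icc 0 1, f x ≠ f y) :
    (∫ t in (0 : ℝ)..1, f t) ^ q < ∫ t in (0 : ℝ)..1, f t ^ q := by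
  let μ : Measure ℝ := volume.restrict (Icc 0 1)
  have : IsProbabilityMeasure μ := ⟨by simp [μ]⟩
  have hint : ∀ h : ℝ → ℝ, ∫ t in (0 : ℝ)..1, h t = ⨍ t, h t ∂μ := fun h => by
    rw [intervalIntegral.integral_of_le zero_le_one, ← integral_Icc_eq_integral_Ioc,
      average_eq_integral]
  rw [hint, hint]
  have hq₀ : 0 ≤ q := zero_le_one.trans hq.le
  refine ((strictConvexOn_rpow hq).ae_eq_const_or_map_average_lt
    (Real.continuous_rpow_const hq₀).continuousOn isClosed_Ici
    ((ae_restrict_iff' measurableSet_Icc).2 (.of_forall hf₀)) hf.integrableOn_Icc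
    (hf.rpow_const fun _ _ => .inr hq₀).integrableOn_Icc).resolve_left fun hconst => ?_
  obtain ⟨x, hx, y, hy, hxy⟩ := hne
  have heq := Measure.eqOn_Icc_of_ae_eq volume zero_ne_one hconst hf continuousOn_const
  exact hxy ((heq hx).trans (heq hy).symm)

lemma Lp_lt_Lp {p' : ℝ} (hp : 0 < p) (hpp' : p < p') (hf : ContinuousOn f (Icc 0 1))
    (hne : ∃ x ∈ Icc 0 1, ∃ y ∈ Icc 0 1, |f x| ≠ |f y|) :
    Lp p 0 1 f < Lp p' 0 1 f := by
  have hp' : 0 < p' := hp.trans hpp'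
  have hA : 0 ≤ ∫ t in (0 : ℝ)..1, |f t| ^ p :=
    intervalIntegral.integral_nonneg zero_le_one fun _ _ => by positivity
  have hJensen : (∫ t in (0 : ℝ)..1, |f t| ^ p) ^ (p' / p) < ∫ t in (0 : ℝ)..1, |f t| ^ p' := by
    obtain ⟨x, hx, y, hy, hxy⟩ := hne
    have hlt := rpow_integral_lt_integral_rpow ((one_lt_div hp).2 hpp')
      (continuousOn_abs_rpow hp.le hf) (fun _ _ => by positivity)
      ⟨x, hx, y, hy, (Real.rpow_left_inj (abs_nonneg _) (abs_nonneg _) hp.ne').not.2 hxy⟩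
    simpa only [← Real.rpow_mul (abs_nonneg _), mul_div_cancel₀ _ hp.ne'] using hlt
  calc Lp p 0 1 f = ((∫ t in (0 : ℝ)..1, |f t| ^ p) ^ (p' / p)) ^ (1 / p') := by
        rw [_root_.Lp, ← Real.rpow_mul hA]
        congr 1
        field_simp
    _ < Lp p' 0 1 f := Real.rpow_lt_rpow (by positivity) hJensen (by positivity)

end Norms

section ExtremalConstants

variable {n : ℕ} {p a b : ℝ}

lemma exists_Lp_nodal_le (n : ℕ) (hab : a ≤ b) (hp : 0 < p) :
    ∃ v : Fin n → Icc a b, ∀ w : Fin n → Icc a b,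
      Lp p a b (fun x => (Lagrange.nodal Finset.univ fun i => (v i : ℝ)).eval x) ≤
        Lp p a b (fun x => (Lagrange.nodal Finset.univ fun i => (w i : ℝ)).eval x) := by
  have hcont : Continuous fun v : Fin n → Icc a b =>
      Lp p a b (fun x => (Lagrange.nodal Finset.univ fun i => (v i : ℝ)).eval x) := by
    simp only [_root_.Lp, Lagrange.eval_nodal]
    refine Continuous.rpow_const ?_ fun _ => .inr (by positivity)
    refine intervalIntegral.continuous_parametric_intervalIntegral_of_continuous' ?_ _ _
    exact Continuous.rpow_const (by fun_prop) fun _ => .inr hp.le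
  obtain ⟨v, -, hv⟩ := isCompact_univ.exists_isMinOn
    ⟨fun _ => ⟨a, left_mem_Icc.2 hab⟩, mem_univ _⟩ hcont.continuousOn
  exact ⟨v, fun w => hv (mem_univ w)⟩

lemma Dstar_le_Lp (hab : a ≤ b) (p : ℝ) {Q : ℝ[X]} (hQ : Q.Monic) :
    Dstar Q.natDegree p a b ≤ Lp p a b fun x => Q.eval x :=
  csInf_le ⟨0, by rintro _ ⟨_, _, _, rfl⟩; exact Lp_nonneg hab _ _⟩ ⟨Q, hQ, rfl, rfl⟩

lemma Dstar_le_Lp_nodal (hab : a ≤ b) (p : ℝ) (v : Fin n → ℝ) :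
    Dstar n p a b ≤ Lp p a b fun x => (Lagrange.nodal Finset.univ v).eval x := by
  simpa only [Lagrange.natDegree_nodal, Finset.card_univ, Fintype.card_fin] using
    Dstar_le_Lp hab p (Lagrange.nodal_monic (s := Finset.univ) (v := v))

theorem exists_Dstar_eq_Lp_nodal (n : ℕ) (hab : a < b) (hp : 0 < p) :
    ∃ v : Fin (n + 1) → Icc a b, Dstar (n + 1) p a b =
      Lp p a b fun x => (Lagrange.nodal Finset.univ fun i => (v i : ℝ)).eval x := by
  obtain ⟨v, hv⟩ := exists_Lp_nodal_le (n + 1) hab.le hp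
  refine ⟨v, (Dstar_le_Lp_nodal hab.le p _).antisymm
    (le_csInf ⟨_, X ^ (n + 1), monic_X_pow _, natDegree_X_pow _, rfl⟩ ?_)⟩
  rintro _ ⟨Q, hQ, hn, rfl⟩
  obtain ⟨w, hw⟩ := exists_nodal_le_of_monic hQ hn hab
  exact (hv w).trans (Lp_mono hab.le hp (Polynomial.continuous _).continuousOn
    Q.continuous.continuousOn hw)

lemma Dstar_pos (n : ℕ) (hab : a < b) (hp : 0 < p) : 0 < Dstar (n + 1) p a b := by
  obtain ⟨v, hv⟩ := exists_Dstar_eq_Lp_nodal n hab hp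
  rw [hv]
  exact Lp_pos hab hp (Polynomial.continuous _).continuousOn
    (exists_mem_Icc_eval_ne_zero Lagrange.nodal_ne_zero hab)

theorem Dstar_lt_Dstar (n : ℕ) {p' : ℝ} (hp : 0 < p) (hpp' : p < p') :
    Dstar (n + 1) p 0 1 < Dstar (n + 1) p' 0 1 := by
  obtain ⟨v, hv⟩ := exists_Dstar_eq_Lp_nodal n zero_lt_one (hp.trans hpp')
  obtain ⟨x, hx, hQx⟩ := exists_mem_Icc_eval_ne_zero
    (Lagrange.nodal_ne_zero (s := Finset.univ) (v := fun i => (v i : ℝ))) (zero_lt_one' ℝ)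
  have hroot := Lagrange.eval_nodal_at_node (v := fun i => (v i : ℝ)) (Finset.mem_univ 0)
  rw [hv]
  refine (Dstar_le_Lp_nodal zero_le_one p _).trans_lt
    (Lp_lt_Lp hp hpp' (Polynomial.continuous _).continuousOn ⟨x, hx, v 0, (v 0).2, ?_⟩)
  rwa [hroot, abs_zero, abs_ne_zero]

lemma Dstar_le_DstarInf (n : ℕ) (hp : 0 < p) : Dstar n p 0 1 ≤ DstarInf n 0 1 := by
  refine le_csInf ⟨_, X ^ n, monic_X_pow n, natDegree_X_pow n, rfl⟩ ?_
  rintro _ ⟨Q, hQ, rfl, rfl⟩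
  exact (Dstar_le_Lp zero_le_one p hQ).trans (Lp_le_Lsup hp Q.continuous.continuousOn)

lemma IsDn.mIoo_div_factorial_mul_Dstar_le {fd : ℕ → ℝ → ℝ} (h : IsDn (n + 1) a b fd)
    (hab : a ≤ b) (hp : 0 < p) :
    mIoo (n + 1) a b fd / (n + 1).factorial * Dstar (n + 1) p a b ≤ Lp p a b (fd 0) := by
  obtain ⟨v, hv⟩ := h.exists_nodal_le hab
  set c := mIoo (n + 1) a b fd / (n + 1).factorial
  have hc : 0 ≤ c := div_nonneg (mIoo_nonneg _ _ _ _) (by positivity)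
  let Q := Lagrange.nodal Finset.univ fun i => (v i : ℝ)
  calc c * Dstar (n + 1) p a b ≤ c * Lp p a b fun x => Q.eval x := by
        gcongr
        exact Dstar_le_Lp_nodal hab p _
    _ = Lp p a b fun x => c * Q.eval x := by rw [Lp_const_mul hab hp, abs_of_nonneg hc]
    _ ≤ Lp p a b (fd 0) := Lp_mono hab hp (by fun_prop) h.continuousOn fun x hx => by
        rw [abs_mul, abs_of_nonneg hc]
        exact hv x hx

lemma IsDn.mIoo_div_Lp_le {fd : ℕ → ℝ → ℝ} (h : IsDn (n + 1) a b fd) (hab : a < b) (hp : 0 < p)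
    (hne : ∃ x ∈ Icc a b, fd 0 x ≠ 0) :
    mIoo (n + 1) a b fd / Lp p a b (fd 0) ≤ (n + 1).factorial / Dstar (n + 1) p a b := by
  have hD := Dstar_pos n hab hp
  have hL := Lp_pos hab hp h.continuousOn hne
  have hle := h.mIoo_div_factorial_mul_Dstar_le hab.le hp
  rw [div_mul_eq_mul_div, div_le_iff₀ (by positivity)] at hle
  rw [div_le_div_iff₀ hL hD]
  linarith

theorem Cnp_eq (n : ℕ) (hp : 0 < p) :
    Cnp (n + 1) p = (n + 1).factorial / Dstar (n + 1) p 0 1 := by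
  refine IsGreatest.csSup_eq ⟨?_, ?_⟩
  · obtain ⟨v, hv⟩ := exists_Dstar_eq_Lp_nodal n zero_lt_one hp
    let Q := Lagrange.nodal Finset.univ fun i => (v i : ℝ)
    have hQ : Q.Monic := Lagrange.nodal_monic
    have hdeg : Q.natDegree = n + 1 := by simp [Q]
    have hm := mIoo_eval_iterate_derivative hQ (zero_lt_one' ℝ)
    rw [hdeg] at hm
    refine ⟨fun k x => (derivative^[k] Q).eval x, isDn_eval_iterate_derivative Q n 0 1,
      exists_mem_Icc_eval_ne_zero hQ.ne_zero zero_lt_one, ?_⟩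
    rw [hm, hv]
    rfl
  · rintro _ ⟨fd, hfd, hne, rfl⟩
    exact hfd.mIoo_div_Lp_le zero_lt_one hp hne

theorem Cnp_lt_Cnp (n : ℕ) {p' : ℝ} (hp : 0 < p) (hpp' : p < p') :
    Cnp (n + 1) p' < Cnp (n + 1) p := by
  rw [Cnp_eq n hp, Cnp_eq n (hp.trans hpp')]
  exact div_lt_div_of_pos_left (by positivity) (Dstar_pos n zero_lt_one hp)
    (Dstar_lt_Dstar n hp hpp')

lemma CnpInf_le_Cnp (n : ℕ) (hp : 0 < p) : CnpInf (n + 1) ≤ Cnp (n + 1) p := by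
  have hD := Dstar_pos n zero_lt_one hp
  rw [Cnp_eq n hp]
  refine Real.sSup_le ?_ (by positivity)
  rintro _ ⟨fd, hfd, hne, rfl⟩
  refine le_trans ?_ (hfd.mIoo_div_Lp_le zero_lt_one hp hne)
  exact div_le_div_of_nonneg_left (mIoo_nonneg _ _ _ _) (Lp_pos zero_lt_one hp hfd.continuousOn hne)
    (Lp_le_Lsup hp hfd.continuousOn)

end ExtremalConstants

/-- `p ↦ D**(n,p,[0,1])` is strictly increasing on `(0,∞]`; equivalently `p ↦ C(n,p)` is
strictly decreasing on `(0,∞]`. -/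
theorem stmt14 (n : ℕ) (hn : 1 ≤ n) :
    (∀ p p' : ℝ, 0 < p → p < p' → Dstar n p 0 1 < Dstar n p' 0 1) ∧
    (∀ p : ℝ, 0 < p → Dstar n p 0 1 < DstarInf n 0 1) ∧
    (∀ p p' : ℝ, 0 < p → p < p' → Cnp n p' < Cnp n p) ∧
    (∀ p : ℝ, 0 < p → CnpInf n < Cnp n p) := by
  obtain ⟨n, rfl⟩ : ∃ k, n = k + 1 := ⟨n - 1, by omega⟩
  refine ⟨fun p p' hp hpp' => Dstar_lt_Dstar n hp hpp', fun p hp => ?_,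
    fun p p' hp hpp' => Cnp_lt_Cnp n hp hpp', fun p hp => ?_⟩
  · exact (Dstar_lt_Dstar n hp (lt_add_one p)).trans_le (Dstar_le_DstarInf _ (by linarith))
  · exact (CnpInf_le_Cnp n (by linarith)).trans_lt (Cnp_lt_Cnp n hp (lt_add_one p))
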